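/- Let |S| = n, let 1 ≤ k ≤ n, and let Q_0 = ∅, Q_1, …, Q_k be a greedy sequence for the total utility U of length k (part of a greedy sequence that, continued for n steps, exhausts S). Then for every subset OPT ⊆ S with |OPT| ≤ k, U(Q_k) ≥ max{1 − 1/e, k/n} · U(OPT); i.e., the greedy algorithm achieves approximation ratio max{1 − 1/e, k/n} for TOPS. -/

import Mathlib

open Finset

/-- Utility of a single trajectory with preference function `ψ` over a set of sites `Q`:
the maximum preference score over `Q`, with value `0` on the empty set. -/
noncomputable def trajU {S : Type*} (ψ : S → ℝ) (Q : Finset S) : ℝ :=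
  if h : Q.Nonempty then Q.sup' h ψ else 0

/-- Total utility: sum of the per-trajectory utilities over all trajectories. -/
noncomputable def totalU {T S : Type*} [Fintype T] (ψ : T → S → ℝ) (Q : Finset S) : ℝ :=
  ∑ j, trajU (ψ j) Q

/-- A greedy sequence of length `k` for a set function `f` on subsets of a finite type `S`:
`Q 0 = ∅` and at each step `θ` (for `1 ≤ θ ≤ k`), `Q θ` is obtained from `Q (θ-1)` by
inserting a new element `s_θ ∈ S \ Q (θ-1)`, chosen so that no other single insertion
gives a larger value of `f`. -/
def IsGreedySeq {S : Type*} [DecidableEq S] (f : Finset S → ℝ)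
    (Q : ℕ → Finset S) (k : ℕ) : Prop :=
  Q 0 = ∅ ∧ ∀ θ, 1 ≤ θ → θ ≤ k →
    (∃ s, s ∉ Q (θ - 1) ∧ Q θ = insert s (Q (θ - 1))) ∧
    ∀ s : S, f (insert s (Q (θ - 1))) ≤ f (Q θ)


lemma trajU_nonneg {S : Type*} (ψ : S → ℝ) (h0 : ∀ s, 0 ≤ ψ s) (Q : Finset S) :
    0 ≤ trajU ψ Q := by
  unfold trajU
  split_ifs with h
  · obtain ⟨s, hs⟩ := h
    exact (h0 s).trans (Finset.le_sup' ψ hs)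
  · exact le_rfl

lemma le_trajU {S : Type*} (ψ : S → ℝ) (Q : Finset S) {s : S} (hs : s ∈ Q) :
    ψ s ≤ trajU ψ Q := by
  unfold trajU
  rw [dif_pos ⟨s, hs⟩]
  exact Finset.le_sup' ψ hs

lemma trajU_le {S : Type*} (ψ : S → ℝ) (Q : Finset S) {a : ℝ} (ha : 0 ≤ a)
    (h : ∀ s ∈ Q, ψ s ≤ a) : trajU ψ Q ≤ a := by
  unfold trajU
  split_ifs with hQ
  · exact Finset.sup'_le hQ ψ h
  · exact ha

lemma trajU_mono {S : Type*} (ψ : S → ℝ) (h0 : ∀ s, 0 ≤ ψ s) {A B : Finset S} (h : A ⊆ B) :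
    trajU ψ A ≤ trajU ψ B :=
  trajU_le ψ A (trajU_nonneg ψ h0 B) fun _ hs => le_trajU ψ B (h hs)

lemma trajU_sub {S : Type*} [DecidableEq S] (ψ : S → ℝ) (h0 : ∀ s, 0 ≤ ψ s) (A Q : Finset S) :
    trajU ψ A ≤ trajU ψ Q + ∑ s ∈ A \ Q, (trajU ψ (insert s Q) - trajU ψ Q) := by
  have hnn : ∀ s ∈ A \ Q, 0 ≤ trajU ψ (insert s Q) - trajU ψ Q := fun s _ =>
    sub_nonneg.2 (trajU_mono ψ h0 (Finset.subset_insert s Q))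
  have hs0 := Finset.sum_nonneg hnn
  apply trajU_le
  · exact add_nonneg (trajU_nonneg ψ h0 Q) hs0
  · intro s hs
    by_cases hq : s ∈ Q
    · linarith [le_trajU ψ Q hq]
    · have h1 := Finset.single_le_sum hnn (Finset.mem_sdiff.2 ⟨hs, hq⟩)
      have h2 := le_trajU ψ (insert s Q) (Finset.mem_insert_self s Q)
      linarith

lemma totalU_mono {T S : Type*} [Fintype T] (ψ : T → S → ℝ) (h0 : ∀ j s, 0 ≤ ψ j s)
    {A B : Finset S} (h : A ⊆ B) : totalU ψ A ≤ totalU ψ B :=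
  Finset.sum_le_sum fun j _ => trajU_mono (ψ j) (h0 j) h

lemma totalU_sub {T S : Type*} [Fintype T] [DecidableEq S] (ψ : T → S → ℝ)
    (h0 : ∀ j s, 0 ≤ ψ j s) (A Q : Finset S) :
    totalU ψ A ≤ totalU ψ Q + ∑ s ∈ A \ Q, (totalU ψ (insert s Q) - totalU ψ Q) := by
  unfold totalU
  simp_rw [← Finset.sum_sub_distrib]
  rw [Finset.sum_comm, ← Finset.sum_add_distrib]
  exact Finset.sum_le_sum fun j _ => trajU_sub (ψ j) (h0 j) A Q

/-- the greedy algorithm achieves approximation ratio `max{1 − 1/e, k/n}`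
for TOPS: if `Q` is a greedy sequence for the total utility `U` that, continued for
`n = |S|` steps, exhausts `S`, then for every `OPT ⊆ S` with `|OPT| ≤ k`,
`U(Q_k) ≥ max{1 − 1/e, k/n}·U(OPT)`. -/
theorem greedy_max_approx {T S : Type*} [Fintype T] [Fintype S] [DecidableEq S]
    (ψ : T → S → ℝ) (hψ : ∀ j s, 0 ≤ ψ j s ∧ ψ j s ≤ 1)
    (n k : ℕ) (hn : Fintype.card S = n) (hk1 : 1 ≤ k) (hk : k ≤ n)
    (Q : ℕ → Finset S) (hgreedy : IsGreedySeq (totalU ψ) Q n)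
    (hQn : Q n = Finset.univ) :
    ∀ OPT : Finset S, OPT.card ≤ k →
      max (1 - 1 / Real.exp 1) ((k : ℝ) / (n : ℝ)) * totalU ψ OPT ≤ totalU ψ (Q k) := by
  intro OPT hOPT
  have h0 : ∀ j s, 0 ≤ ψ j s := fun j s => (hψ j s).1
  obtain ⟨hQ0, hstep⟩ := hgreedy
  have hcard : ∀ θ, θ ≤ n → (Q θ).card = θ := by
    intro θ
    induction θ with
    | zero => intro _; simp [hQ0]
    | succ m ih =>
      intro hm
      obtain ⟨⟨s, hs, hQ⟩, -⟩ := hstep (m + 1) (by omega) hm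
      simp only [Nat.add_sub_cancel] at hs hQ
      rw [hQ, Finset.card_insert_of_notMem hs, ih (by omega)]
  have hU0 : totalU ψ (Q 0) = 0 := by simp [hQ0, totalU, trajU]
  have hmono : ∀ m, m + 1 ≤ n → totalU ψ (Q m) ≤ totalU ψ (Q (m + 1)) := by
    intro m hm
    obtain ⟨⟨s, hs, hQ⟩, -⟩ := hstep (m + 1) (by omega) hm
    simp only [Nat.add_sub_cancel] at hs hQ
    rw [hQ]
    exact totalU_mono ψ h0 (Finset.subset_insert s _)
  have hkey : ∀ m, m + 1 ≤ n → ∀ A : Finset S, totalU ψ A ≤ totalU ψ (Q m) +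
      ((A \ Q m).card : ℝ) * (totalU ψ (Q (m + 1)) - totalU ψ (Q m)) := by
    intro m hm A
    have hg := (hstep (m + 1) (by omega) hm).2
    simp only [Nat.add_sub_cancel] at hg
    have h1 := totalU_sub ψ h0 A (Q m)
    have h2 := Finset.sum_le_card_nsmul (A \ Q m)
      (fun s => totalU ψ (insert s (Q m)) - totalU ψ (Q m))
      (totalU ψ (Q (m + 1)) - totalU ψ (Q m)) (fun s _ => by linarith [hg s])
    rw [nsmul_eq_mul] at h2
    linarith
  have hOnn : 0 ≤ totalU ψ OPT := Finset.sum_nonneg fun j _ => trajU_nonneg (ψ j) (h0 j) OPT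
  have hkpos : (1 : ℝ) ≤ k := by exact_mod_cast hk1
  have hnpos : (0 : ℝ) < n := by exact_mod_cast (by omega : 0 < n)
  rw [max_mul_of_nonneg _ _ hOnn]
  apply max_le
  · have hr0 : (0 : ℝ) ≤ 1 - 1 / k := by
      rw [sub_nonneg, div_le_one (by linarith)]; exact hkpos
    have hind : ∀ m, m ≤ k →
        totalU ψ OPT - totalU ψ (Q m) ≤ (1 - 1 / (k : ℝ)) ^ m * totalU ψ OPT := by
      intro m
      induction m with
      | zero => intro _; simp [hU0]
      | succ m ih =>
        intro hm
        have ih := ih (by omega)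
        have h1 := hkey m (by omega) OPT
        have hd := hmono m (by omega)
        have hc : ((OPT \ Q m).card : ℝ) ≤ k := by
          exact_mod_cast (Finset.card_le_card Finset.sdiff_subset).trans hOPT
        have h2 := mul_le_mul_of_nonneg_right hc (sub_nonneg.2 hd)
        have h3 : (totalU ψ OPT - totalU ψ (Q m)) / k ≤
            totalU ψ (Q (m + 1)) - totalU ψ (Q m) := by
          rw [div_le_iff₀ (by linarith)]; linarith
        have h4 := mul_le_mul_of_nonneg_left ih hr0
        calc totalU ψ OPT - totalU ψ (Q (m + 1))
            ≤ (totalU ψ OPT - totalU ψ (Q m)) - (totalU ψ OPT - totalU ψ (Q m)) / k := by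
              linarith
          _ = (1 - 1 / (k : ℝ)) * (totalU ψ OPT - totalU ψ (Q m)) := by ring
          _ ≤ _ := h4
          _ = _ := by ring
    have hfin := hind k le_rfl
    have hexp : (1 - 1 / (k : ℝ)) ^ k ≤ 1 / Real.exp 1 := by
      have := Real.one_sub_div_pow_le_exp_neg (n := k) (t := 1) hkpos
      rwa [Real.exp_neg, ← one_div] at this
    have := mul_le_mul_of_nonneg_right hexp hOnn
    linarith
  · have hOu : totalU ψ OPT ≤ totalU ψ (Finset.univ : Finset S) :=
      totalU_mono ψ h0 (Finset.subset_univ _)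
    have hind : ∀ m, m ≤ n →
        (m : ℝ) * totalU ψ (Finset.univ : Finset S) ≤ n * totalU ψ (Q m) := by
      intro m
      induction m with
      | zero => intro _; simp [hU0]
      | succ m ih =>
        intro hm
        have ih := ih (by omega)
        have h1 := hkey m hm Finset.univ
        have hc : (((Finset.univ : Finset S) \ Q m).card : ℝ) = n - m := by
          rw [← Finset.compl_eq_univ_sdiff, Finset.card_compl, hn, hcard m (by omega),
            Nat.cast_sub (by omega)]
        rw [hc] at h1
        have hmn : (m : ℝ) + 1 ≤ n := by exact_mod_cast hm
        push_cast
        have h2 := mul_le_mul_of_nonneg_left ih (by linarith : (0 : ℝ) ≤ n - m - 1)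
        have h3 := mul_le_mul_of_nonneg_left h1 hnpos.le
        have hp : (0 : ℝ) < n - m := by linarith
        refine le_of_mul_le_mul_left ?_ hp
        linarith
    have hfin := hind k hk
    rw [div_mul_eq_mul_div, div_le_iff₀ hnpos]
    have := mul_le_mul_of_nonneg_left hOu (by linarith : (0 : ℝ) ≤ k)
    linarith
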